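/- arXiv:1805.07817 — 14 statements merged into one kernel-verified Lean document; each statement's English description precedes it below -/
import Mathlib

section
/- Let (A,[ ]) be a ternary group. Then (A,[ ]) is a knot-theoretic ternary group (i.e., satisfies (A3L) and (A3R)) if and only if (A,[ ]) is semi-commutative and satisfies [abb] = ā for all a,b ∈ A (where ā denotes the skew element of a). In particular, in each knot-theoretic ternary group [ccc] = c̄ for every c ∈ A. -/
variable {A : Type*}

/-- Associativity of a ternary operation. -/
def TernaryAssoc (f : A → A → A → A) : Prop :=
  ∀ a b c d e : A,
    f (f a b c) d e = f a (f b c d) e ∧ f a (f b c d) e = f a b (f c d e)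

/-- Ternary quasigroup: unique solvability in each coordinate. -/
def TernaryQuasigroup (f : A → A → A → A) : Prop :=
  (∀ a b c : A, ∃! z : A, f z a b = c) ∧
  (∀ a b c : A, ∃! z : A, f a z b = c) ∧
  (∀ a b c : A, ∃! z : A, f a b z = c)

/-- A ternary group is an associative ternary quasigroup. -/
def TernaryGroup (f : A → A → A → A) : Prop :=
  TernaryAssoc f ∧ TernaryQuasigroup f

/-- The axiom (A3L). -/
def A3L (f : A → A → A → A) : Prop :=
  ∀ a b c d : A, f (f a b c) c d = f (f a b (f b c d)) (f b c d) d

/-- The axiom (A3R). -/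
def A3R (f : A → A → A → A) : Prop :=
  ∀ a b c d : A, f a b (f b c d) = f a (f a b c) (f (f a b c) c d)

/-- Semi-commutativity: [abc] = [cba]. -/
def SemiComm (f : A → A → A → A) : Prop :=
  ∀ a b c : A, f a b c = f c b a

/-- A knot-theoretic ternary group. -/
def KnotTheoretic (f : A → A → A → A) : Prop :=
  TernaryGroup f ∧ A3L f ∧ A3R f

/-- `sk` is a skew-element operation: [a (sk a) a] = a. -/
def IsSkew (f : A → A → A → A) (sk : A → A) : Prop :=
  ∀ a : A, f a (sk a) a = a

/-- Entropic (medial) ternary operation. -/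
def Entropic (f : A → A → A → A) : Prop :=
  ∀ a₁ a₂ a₃ b₁ b₂ b₃ c₁ c₂ c₃ : A,
    f (f a₁ a₂ a₃) (f b₁ b₂ b₃) (f c₁ c₂ c₃) = f (f a₁ b₁ c₁) (f a₂ b₂ c₂) (f a₃ b₃ c₃)

/-- A ternary group is knot-theoretic iff it is semi-commutative and
satisfies [abb] = ā; in particular, in each knot-theoretic ternary group [ccc] = c̄. -/
theorem stmt0 (f : A → A → A → A) (hG : TernaryGroup f)
    (sk : A → A) (hsk : IsSkew f sk) :
    ((A3L f ∧ A3R f) ↔ (SemiComm f ∧ ∀ a b : A, f a b b = sk a)) ∧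
    ((A3L f ∧ A3R f) → ∀ c : A, f c c c = sk c) := by
  obtain ⟨hA, hq1, hq2, hq3⟩ := hG
  have as1 : ∀ a b c d e, f (f a b c) d e = f a b (f c d e) :=
    fun a b c d e => (hA a b c d e).1.trans (hA a b c d e).2
  have as2 : ∀ a b c d e, f a (f b c d) e = f a b (f c d e) :=
    fun a b c d e => (hA a b c d e).2
  have inj1 : ∀ a b x y, f x a b = f y a b → x = y :=
    fun a b x y h => (hq1 a b (f y a b)).unique h rfl
  have inj3 : ∀ a b x y, f a b x = f a b y → x = y :=
    fun a b x y h => (hq3 a b (f a b y)).unique h rfl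
  -- cancellation laws of the skew element
  have k1 : ∀ x w, f x (sk x) w = w := by
    intro x w
    obtain ⟨z, hz, -⟩ := hq3 x x w
    rw [← hz, ← as1, hsk]
  have k2 : ∀ x w, f w (sk x) x = w := by
    intro x w
    obtain ⟨z, hz, -⟩ := hq1 x x w
    rw [← hz, as1, hsk]
  have k3 : ∀ x w, f w x (sk x) = w := by
    intro x w
    apply inj1 x x
    rw [as1, ← as2, hsk]
  have fwd : A3L f → SemiComm f ∧ ∀ a b : A, f a b b = sk a := by
    intro hL
    have h0 : ∀ b c d w, f c c w = f b c (f d b (f c d w)) := by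
      intro b c d w
      have h := hL c b c d
      simp only [as1, as2] at h
      have h' := inj3 _ _ _ _ h
      have h2 := congrArg (fun t => f t (sk d) w) h'
      simpa only [as1, as2, k1] using h2
    have hs : ∀ b c w, f c c w = f b b w := by
      intro b c w
      have h := h0 b c (sk c) w
      rw [k1, ← as2 b c (sk c) b w, k1] at h
      exact h
    have h4 : ∀ b w, f b b (f b b w) = w := by
      intro b w
      exact (inj3 b b _ _ (h0 b b b w)).symm
    refine ⟨?_, ?_⟩
    · intro x y z
      have key : f z y (f y y (f y z z)) = f z z z := by
        have h := congrArg (fun t => f z t z) (h4 y z)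
        simpa only [as1, as2] using h
      apply inj1 (f x y z) z
      simp only [as1, as2]
      rw [← h0 x y z z, hs y x (f y z z), key, hs y z]
    · intro a b
      calc f a b b = f a b (f b (sk a) a) := by rw [k2]
        _ = f a (f b b (sk a)) a := (as2 _ _ _ _ _).symm
        _ = f a (f a a (sk a)) a := by rw [hs a b]
        _ = f a a a := by rw [as2, k2]
        _ = f a a (f a a (sk a)) := by rw [k3]
        _ = sk a := h4 a _
  refine ⟨⟨fun h => fwd h.1, ?_⟩, fun h c => (fwd h.1).2 c c⟩
  rintro ⟨hc, hb⟩
  have hb' : ∀ b w, f b b w = sk w := fun b w => by rw [hc, hb]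
  refine ⟨?_, ?_⟩
  · intro a b c d
    rw [as1, as1 a b (f b c d), hb', hb']
  · intro a b c d
    rw [← as2 a b b c d, ← as2 a (f a b c) (f a b c) c d, hb', hb']
end

section
/- Let (A₁,+₁) and (A₂,+₂) be abelian groups, let a ∈ A₁ with a+a = 0 and b ∈ A₂ with b+b = 0, and define the knot-theoretic ternary operations [xyz]₁ = x −₁ y +₁ z +₁ a on A₁ and [xyz]₂ = x −₂ y +₂ z +₂ b on A₂. Then there exists a bijection h : A₁ → A₂ with h([xyz]₁) = [h(x)h(y)h(z)]₂ for all x,y,z ∈ A₁ if and only if there exists a group isomorphism h : (A₁,+₁) → (A₂,+₂) with h(a) = b. -/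
variable {A : Type*}

/-- Two knot-theoretic ternary groups T((A₁,+),a) and T((A₂,+),b) are
isomorphic as ternary groups iff there is a group isomorphism h with h(a) = b. -/
theorem stmt2 {A₁ A₂ : Type*} [AddCommGroup A₁] [AddCommGroup A₂]
    (a : A₁) (b : A₂) (ha : a + a = 0) (hb : b + b = 0) :
    (∃ h : A₁ ≃ A₂, ∀ x y z : A₁,
        h (x - y + z + a) = h x - h y + h z + b) ↔
    (∃ h : A₁ ≃+ A₂, h a = b) := by
  constructor
  · rintro ⟨h, hh⟩
    have h1 : ∀ x, h (x + a) = h x + b := by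
      intro x
      have := hh x 0 0
      simpa using this
    have h2 : ∀ x z, h (x + z) = h x - h 0 + h z := by
      intro x z
      have e := hh x 0 z
      rw [sub_zero, h1] at e
      exact add_right_cancel e
    refine ⟨{ toEquiv := h.trans (Equiv.subRight (h 0)), map_add' := ?_ }, ?_⟩
    · intro x y
      simp only [Equiv.toFun_as_coe, Equiv.trans_apply, Equiv.subRight_apply, h2 x y]
      abel
    · have e := h1 0
      rw [zero_add] at e
      change h a - h 0 = b
      rw [e]
      abel
  · rintro ⟨h, hab⟩
    refine ⟨h.toEquiv, fun x y z => ?_⟩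
    simp [hab]
end

section
/- A ternary groupoid (A,[ ]) is a knot-theoretic ternary group if and only if it satisfies, for all a,b,c,d,e ∈ A, the exchange conditions (a1): [[abc]de]=[[adc]be] and (a2): [a[bcd]e]=[a[bed]c], and there exists a unary operation x ↦ x̄ on A such that [abb] = ā and [āax] = [xaā] = x for all a,b,x ∈ A. -/
variable {A : Type*}

/-- A ternary groupoid is a knot-theoretic ternary group iff it satisfies
the exchange conditions (a1) and (a2), and there is a unary operation x ↦ x̄ with
[abb] = ā and [āax] = [xaā] = x. -/
theorem stmt3 (f : A → A → A → A) :
    KnotTheoretic f ↔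
    ((∀ a b c d e : A, f (f a b c) d e = f (f a d c) b e) ∧
     (∀ a b c d e : A, f a (f b c d) e = f a (f b e d) c) ∧
     ∃ sk : A → A, (∀ a b : A, f a b b = sk a) ∧
       ∀ a x : A, f (sk a) a x = x ∧ f x a (sk a) = x) := by
  constructor
  · rintro ⟨⟨has, q1, q2, q3⟩, hl, hr⟩
    have as1 : ∀ a b c d e, f (f a b c) d e = f a (f b c d) e := fun a b c d e => (has a b c d e).1
    have as2 : ∀ a b c d e, f a (f b c d) e = f a b (f c d e) := fun a b c d e => (has a b c d e).2
    have can3 : ∀ a b x y, f a b x = f a b y → x = y := fun a b x y h =>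
      (q3 a b _).unique h rfl
    have can1 : ∀ a b x y, f x a b = f y a b → x = y := fun a b x y h =>
      (q1 a b _).unique h rfl
    have can2 : ∀ a b x y, f a x b = f a y b → x = y := fun a b x y h =>
      (q2 a b _).unique h rfl
    -- `[ccd]` and `[abb]` do not depend on the repeated letter
    have L : ∀ c u d, f c c d = f u u d := by
      intro c u d
      obtain ⟨b, hb, -⟩ := q1 c d u
      have h := hl b b c d
      rw [hb, as1, as2, as1, as2] at h
      exact can3 _ _ _ _ h
    have R : ∀ a b v, f a b b = f a v v := by
      intro a b v
      obtain ⟨c, hc, -⟩ := q3 a b v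
      have h := hr a b c c
      rw [hc, ← as2, ← as1, ← as2, ← as1] at h
      exact can1 _ _ _ _ h
    have LR : ∀ a b c, f b b a = f a c c := fun a b c => (L b a a).trans (R a a c)
    have inv : ∀ a x, f a a (f a a x) = x := by
      intro a x
      obtain ⟨t, ht, -⟩ := q2 a a a
      have h1 : ∀ y, f a t y = y := by
        intro y
        obtain ⟨z, hz, -⟩ := q3 a a y
        rw [← hz, ← as2, ← as1, ht]
      rw [L a t x, ← as2, h1 t, h1]
    have inv2 : ∀ a b x, f a a (f b b x) = x := by
      intro a b x
      rw [L b a x, inv]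
    -- semicommutativity
    have sc : ∀ b c d, f b c d = f d c b := by
      intro b c d
      have key : f b c (f d (f b c d) b) = f b c (f d (f d c b) b) := by
        have e1 : f b c (f d (f b c d) b) = f b b b := by
          rw [← as2 b c d (f b c d) b, ← as1 b c d (f b c d) b]
          exact L _ _ _
        have e2 : f b c (f d (f d c b) b) = f b b b := by
          rw [← as1 d d c b b, LR c d d, as1 c d d b b, LR b d b, ← as2 b c c, inv2]
        rw [e1, e2]
      exact can2 _ _ _ _ (can3 _ _ _ _ key)
    refine ⟨?_, ?_, fun a => f a a a, fun a b => R a b a, fun a x => ⟨?_, ?_⟩⟩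
    · intro a b c d e
      rw [as1, sc b c d, ← as1]
    · intro a b c d e
      rw [as2, sc c d e, ← as2]
    · rw [as1, as2, inv]
    · rw [sc, as1, as2, inv]
  · rintro ⟨a1, a2, s, h0, h12⟩
    have h1 : ∀ a x, f (s a) a x = x := fun a x => (h12 a x).1
    have h2 : ∀ a x, f x a (s a) = x := fun a x => (h12 a x).2
    have ss : ∀ a, s (s a) = a := fun a => by rw [← h0 (s a) a, h1]
    have h3 : ∀ a x, f a (s a) x = x := fun a x => by
      have := h1 (s a) x
      rwa [ss] at this
    have e0 : ∀ a c e, f (f a a c) c e = e := fun a c e => by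
      rw [a1, h0, h1]
    have h0' : ∀ a b, f a a b = s b := fun a b => by
      have := e0 a b b
      rw [h0] at this
      rw [← this, ss]
      simp [this]
    have k1 : ∀ a c d, f (s c) d a = s (f a d c) := fun a c d => by
      rw [← h0' a c, a1, h0]
    have k2 : ∀ a c d, f (s c) d a = s (f c d a) := fun a c d => by
      rw [← h0 c a, a1, h0]
    have sc : ∀ a b c, f a b c = f c b a := fun a b c => by
      have := (k1 a c b).symm.trans (k2 a c b)
      rw [← ss (f a b c), this, ss]
    have Q : ∀ a b c d, f (f a b c) c d = s (f a b d) := fun a b c d => by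
      rw [a1, h0, k2]
    have m : ∀ a x y, f x (s a) y = s (f x a y) := fun a x y => by
      have := Q x (s a) a y
      rw [sc x (s a) a, h3] at this
      rw [this, ss]
    have B : ∀ a b c t e, f (f a b c) (f c b t) e = f a t e := fun a b c t e => by
      rw [a1, a2 a c b t c, h0', m, k2, Q, ss]
    have inv : ∀ b c d, f c b (f b c d) = d := fun b c d => by
      rw [sc c b, sc b c d, Q, h0, ss]
    have as1 : ∀ a b c d e, f (f a b c) d e = f a (f b c d) e := fun a b c d e => by
      rw [← B a b c (f b c d) e, inv]
    have as2 : ∀ a b c d e, f a (f b c d) e = f a b (f c d e) := fun a b c d e => by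
      rw [sc a _ e, sc b c d, ← as1, sc _ b a, sc e d c]
    have inv2 : ∀ a b z, f a (f a z b) b = z := fun a b z => by
      rw [a2, h0, h3]
    have inv1 : ∀ b c d, f (f d c b) b c = d := fun b c d => by
      rw [Q, h0, ss]
    refine ⟨⟨fun a b c d e => ⟨as1 a b c d e, as2 a b c d e⟩, ?_, ?_, ?_⟩, ?_, ?_⟩
    · intro a b c
      exact ⟨f c b a, inv1 _ _ _, fun y hy => by rw [← hy, inv1]⟩
    · intro a b c
      exact ⟨f a c b, inv2 _ _ _, fun y hy => by rw [← hy, inv2]⟩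
    · intro a b c
      exact ⟨f b a c, inv _ _ _, fun y hy => by rw [← hy, inv]⟩
    · intro a b c d
      rw [Q, Q]
    · intro a b c d
      rw [← as2, ← as1, h0, ← as2, ← as1, h0]
end

section
/- A ternary groupoid (A,[ ]) is a knot-theoretic ternary group if and only if it is entropic and there exists a unary operation x ↦ x̄ on A such that [abb] = ā and [āax] = [xaā] = x for all a,b,x ∈ A. -/
variable {A : Type*}

theorem fwd_aux (f : A → A → A → A) (h : KnotTheoretic f) :
    (Entropic f ∧
     ∃ sk : A → A, (∀ a b : A, f a b b = sk a) ∧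
       ∀ a x : A, f (sk a) a x = x ∧ f x a (sk a) = x) := by
  obtain ⟨⟨has, q1, q2, q3⟩, hL, hR⟩ := h
  have as1 : ∀ a b c d e, f (f a b c) d e = f a b (f c d e) :=
    fun a b c d e => (has a b c d e).1.trans (has a b c d e).2
  have as2 : ∀ a b c d e, f a (f b c d) e = f a b (f c d e) :=
    fun a b c d e => (has a b c d e).2
  have c1 : ∀ {x y : A} (a b : A), f x a b = f y a b → x = y :=
    fun a b h => (q1 a b _).unique h rfl
  have c2 : ∀ {x y : A} (a b : A), f a x b = f a y b → x = y :=
    fun a b h => (q2 a b _).unique h rfl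
  have c3 : ∀ {x y : A} (a b : A), f a b x = f a b y → x = y :=
    fun a b h => (q3 a b _).unique h rfl
  have r1 : ∀ a b e, f a b b = f a e e := by
    intro a b e
    obtain ⟨c, hc, -⟩ := q3 a b e
    have h := hR a b c b
    rw [← as1, ← as1, hc] at h
    exact c1 _ _ h
  have l1 : ∀ d c e, f c c d = f e e d := by
    intro d c e
    obtain ⟨b, hb, -⟩ := q1 c d e
    have h := hL d b c d
    rw [as1, as1, hb] at h
    exact c3 _ _ h
  have hs : ∀ a b, f a b b = f a a a := fun a b => r1 a b a
  have hs' : ∀ a b, f b b a = f a a a := fun a b => l1 a b a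
  have k1 : ∀ a x, f (f a a a) a x = x := by
    intro e x
    obtain ⟨u, hu, -⟩ := q2 e e e
    have e1 : ∀ x, f e u x = x := by
      intro x
      obtain ⟨z, hz, -⟩ := q3 e e x
      rw [← hz, ← as1, hu]
    have e2 : ∀ x, f u e x = x := by
      intro x
      apply c2 e e
      rw [as2, e1]
    rw [← hs e u, as1, e2, e1]
  have k2 : ∀ a x, f x a (f a a a) = x := by
    intro e x
    obtain ⟨u, hu, -⟩ := q2 e e e
    have e1 : ∀ x, f x u e = x := by
      intro x
      obtain ⟨z, hz, -⟩ := q1 e e x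
      rw [← hz, as1, hu]
    have e2 : ∀ x, f x e u = x := by
      intro x
      apply c2 e e
      rw [← (has e x e u e).1, as1, hu]
    rw [← hs' e u, ← as1, e2, e1]
  have sc : ∀ a b c, f a b c = f c b a := by
    intro a b c
    symm
    apply c1 (f a b c) a
    rw [hs' a (f a b c), as1, ← (has a a b c a).1, hs' b a, ← as1, k2, hs' a c]
  have w1 : ∀ a b c d e, f a b (f c d e) = f c b (f a d e) := by
    intro a b c d e
    rw [← as1, sc a b c, as1]
  have w2 : ∀ a b c d e, f a b (f c d e) = f a d (f c b e) := by
    intro a b c d e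
    rw [← as2, sc b c d, as2]
  refine ⟨?_, fun a => f a a a, hs, fun a x => ⟨k1 a x, k2 a x⟩⟩
  intro a1 a2 a3 b1 b2 b3 d1 d2 d3
  simp only [as1, as2]
  rw [w2 a1 a2 a3 b1, w2 b2 b3 d1 d2, w1 b2 d2 d1 b3, w1 a3 a2 d1 d2,
    w1 a3 d2 b2 b3]

theorem bwd_aux (f : A → A → A → A) (E : Entropic f) (s : A → A)
    (h1 : ∀ a b : A, f a b b = s a)
    (h2 : ∀ a x : A, f (s a) a x = x) (h3 : ∀ a x : A, f x a (s a) = x) :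
    KnotTheoretic f := by
  have ss : ∀ a, s (s a) = a := fun a => by rw [← h1 (s a) a, h2]
  have h2' : ∀ a x : A, f a (s a) x = x := fun a x => by
    have := h2 (s a) x
    rwa [ss] at this
  have h3' : ∀ a x : A, f x (s a) a = x := fun a x => by
    have := h3 (s a) x
    rwa [ss] at this
  have h1' : ∀ a b : A, f (s a) b b = a := fun a b => by rw [h1, ss]
  have L : ∀ b c, f b b c = s c := by
    intro b c
    have := E b b (s b) (s b) b b (s c) b b
    rwa [h3, h1', h1', h2', h1, h3'] at this
  have sc : ∀ a b c, f a b c = f c b a := by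
    have t : ∀ a b c, f a b c = f (s c) b (s a) := by
      intro a b c
      have := E b (s b) a b (s b) b c (s b) b
      rwa [h2', h2', h3', L, L, h1, ss] at this
    have t2 : ∀ a b c, f a b c = f (s a) b (s c) := by
      intro a b c
      have := E a (s b) b b (s b) b b (s b) c
      rwa [h3', h2', h2', L, L, h1, ss] at this
    intro a b c
    rw [t, t2, ss, ss]
  have t3 : ∀ a b c, f a b c = f (s a) (s b) c := by
    intro a b c
    have := E (s a) a a (s b) a a c a (s a)
    rwa [h1', h1', h3, L, L, ss, h3'] at this
  have as1 : ∀ a b c d e, f (f a b c) d e = f a b (f c d e) := by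
    intro a b c d e
    have := E a b c a (s a) d (s a) a e
    rwa [h2', h2, h3, h3'] at this
  have as2 : ∀ a b c d e, f a (f b c d) e = f a b (f c d e) := by
    intro a b c d e
    have := E a d (s d) b c d e c (s c)
    rw [h3, h3, h1, h2] at this
    rw [this, as1, sc e, ← t3 c d e]
  have inv : ∀ a b c, f a b (f b a c) = c := by
    intro a b c
    rw [← as1, h1, h2]
  refine ⟨⟨fun a b c d e => ⟨(as1 _ _ _ _ _).trans (as2 _ _ _ _ _).symm, as2 _ _ _ _ _⟩,
    ?_, ?_, ?_⟩, ?_, ?_⟩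
  · intro a b c
    have inv_b : f b a (f a b c) = c := inv b a c
    refine ⟨f a b c, ?_, ?_⟩
    · show f (f a b c) a b = c
      rw [sc, inv_b]
    · intro y hy
      rw [← hy, sc y, inv]
  · intro a b c
    have key : ∀ c, f a (f a c b) b = c := by
      intro c
      rw [as2, h1, L, ss]
    exact ⟨f a c b, key c, fun y hy => by rw [← hy, key]⟩
  · intro a b c
    exact ⟨f b a c, inv a b c, fun y hy => by rw [← hy, inv]⟩
  · intro a b c d
    rw [as1, as1, L, L]
  · intro a b c d
    rw [← as1, ← as1, h1, h1]

/-- A ternary groupoid is a knot-theoretic ternary group iff it is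
entropic and there is a unary operation x ↦ x̄ with [abb] = ā and [āax] = [xaā] = x. -/
theorem stmt4 (f : A → A → A → A) :
    KnotTheoretic f ↔
    (Entropic f ∧
     ∃ sk : A → A, (∀ a b : A, f a b b = sk a) ∧
       ∀ a x : A, f (sk a) a x = x ∧ f x a (sk a) = x) := by
  exact ⟨fwd_aux f, fun ⟨E, s, h1, h2⟩ =>
    bwd_aux f E s h1 (fun a x => (h2 a x).1) (fun a x => (h2 a x).2)⟩
end

section
/- A ternary groupoid (A,[ ]) is a knot-theoretic ternary group if and only if it is semi-commutative, satisfies (A3L) and the condition (a2): [a[bcd]e]=[a[bed]c] for all a,b,c,d,e ∈ A, and there exists an involutive unary operation x ↦ x̄ on A (i.e., x̄̄ = x for all x) such that [aāx] = x for all a,x ∈ A. -/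
variable {A : Type*}

/-- A ternary groupoid is a knot-theoretic ternary group iff it is
semi-commutative, satisfies (A3L) and (a2), and there is an involutive unary operation
x ↦ x̄ with [aāx] = x. -/
theorem stmt6 (f : A → A → A → A) :
    KnotTheoretic f ↔
    (SemiComm f ∧ A3L f ∧
     (∀ a b c d e : A, f a (f b c d) e = f a (f b e d) c) ∧
     ∃ sk : A → A, (∀ x : A, sk (sk x) = x) ∧ ∀ a x : A, f a (sk a) x = x) := by
  constructor
  · rintro ⟨⟨has, q1, q2, q3⟩, hL, _⟩
    have a1 : ∀ a b c d e, f (f a b c) d e = f a (f b c d) e := fun a b c d e => (has a b c d e).1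
    have a2 : ∀ a b c d e, f a (f b c d) e = f a b (f c d e) := fun a b c d e => (has a b c d e).2
    have c1 : ∀ a b x y, f x a b = f y a b → x = y := fun a b x y h =>
      (q1 a b (f y a b)).unique h rfl
    have c2 : ∀ a b x y, f a x b = f a y b → x = y := fun a b x y h =>
      (q2 a b (f a y b)).unique h rfl
    have c3 : ∀ a b x y, f a b x = f a b y → x = y := fun a b x y h =>
      (q3 a b (f a b y)).unique h rfl
    have K : ∀ c y d, f c c d = f y y d := by
      intro c y d
      obtain ⟨b, hb, -⟩ := q1 c d y
      have h := hL c b c d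
      simp only [hb] at h
      rw [a1, a2, a1, a2] at h
      exact c3 _ _ _ _ h
    have J : ∀ c d, f c c (f c c d) = d := by
      intro c d
      have h := K (f c c c) c d
      rw [a1, a2] at h
      have h2 := c3 _ _ _ _ h
      rwa [a2] at h2
    have sc : ∀ a b c, f a b c = f c b a := by
      intro a b c
      have h : f (f c b a) (f a b c) a = f (f a b c) (f a b c) a := by
        calc f (f c b a) (f a b c) a = f c b (f a a (f b c a)) := by rw [a1, a2, a2]
          _ = f c b (f b b (f b c a)) := by rw [K a b]
          _ = f c (f b (f b b b) c) a := by rw [← a2 b b b c a, ← a1 b b b c a, ← a2]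
          _ = f c c a := by rw [a2 b b b b c, J]
          _ = _ := K _ _ _
      exact (c1 _ _ _ _ h).symm
    refine ⟨sc, hL, fun a b c d e => by rw [a2, a2, sc c d e], ?_⟩
    choose sk hsk _ using fun a => q2 a a a
    have l1 : ∀ a x, f a (sk a) x = x := by
      intro a x
      obtain ⟨v, hv, -⟩ := q3 a a x
      rw [← hv, ← a2, ← a1, hsk]
    have l2 : ∀ a x, f (sk a) a x = x := by
      intro a x
      apply c2 a a
      rw [← a1, hsk]
    refine ⟨sk, fun x => ?_, l1⟩
    apply c2 (sk x) (sk x)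
    rw [hsk, l2]
  · rintro ⟨sc, hL, m, sk, hi, l1⟩
    have sc' : ∀ a b c, f a b c = f c b a := sc
    have l2 : ∀ a x, f (sk a) a x = x := fun a x => by
      have := l1 (sk a) x
      rwa [hi] at this
    have r1 : ∀ a x, f x a (sk a) = x := fun a x => by rw [sc', l2]
    have r2 : ∀ a x, f x (sk a) a = x := fun a x => by rw [sc', l1]
    have t : ∀ a b d e, f a (f b e d) (sk b) = f a d e := fun a b d e => by
      rw [m, l1]
    have t' : ∀ a b d e, f a (f (sk b) e d) b = f a d e := fun a b d e => by
      rw [m, l2]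
    have a2 : ∀ e d a b c, f e (f d a b) c = f e d (f a b c) := by
      intro e d a b c
      rw [← t' e c d (f a b c), sc' (sk c) _ d, sc' a b c, t]
    have a1 : ∀ a b c d e, f (f a b c) d e = f a (f b c d) e := by
      intro a b c d e
      rw [sc' _ d e, sc' a b c, ← a2, sc' e, sc' d c b]
    have e3 : ∀ a b c, ∃! z, f a b z = c := fun a b c =>
      ⟨f (sk b) (sk a) c, by simp only [← a2, l1], fun y hy => by
        simp only at hy
        rw [← hy, ← a2, ← a1, r2, l2]⟩
    refine ⟨⟨fun a b c d e => ⟨a1 a b c d e, a2 a b c d e⟩, ?_, ?_, e3⟩, hL, ?_⟩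
    · intro a b c
      simpa only [sc' _ a b] using e3 b a c
    · intro a b c
      refine ⟨f (sk a) c (sk b), by simp only [← a1, l1, r2], fun y hy => ?_⟩
      simp only at hy
      rw [← hy, a2, l2, r1]
    · intro a b c d
      have h := hL d c b a
      rw [sc' (f d c b), sc' d c b, sc' c b a, sc' _ _ a, sc' d c] at h
      exact h
end

section
/- For a ternary group (A,[ ]) the following conditions are equivalent: (1) (A,[ ]) is idempotent, i.e., [aaa] = a for all a ∈ A; (2) (A,[ ]) is idempotent and knot-theoretic (satisfies (A3L) and (A3R)); (3) (A,[ ]) is Mal'cev, i.e., [abb] = [bba] = a for all a,b ∈ A. -/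
variable {A : Type*}

/-- For a ternary group, the following are equivalent:
(1) idempotent; (2) idempotent and knot-theoretic; (3) Mal'cev. -/
theorem stmt7 (f : A → A → A → A) (hG : TernaryGroup f) :
    ((∀ a : A, f a a a = a) ↔ ((∀ a : A, f a a a = a) ∧ A3L f ∧ A3R f)) ∧
    ((∀ a : A, f a a a = a) ↔ (∀ a b : A, f a b b = a ∧ f b b a = a)) := by
  obtain ⟨hA, hL, -, hR⟩ := hG
  have as1 : ∀ a b c d e : A, f (f a b c) d e = f a (f b c d) e := fun a b c d e => (hA a b c d e).1
  have as2 : ∀ a b c d e : A, f (f a b c) d e = f a b (f c d e) :=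
    fun a b c d e => (hA a b c d e).1.trans (hA a b c d e).2
  have key : (∀ a : A, f a a a = a) → ∀ a b : A, f a b b = a ∧ f b b a = a := by
    intro h a b
    constructor
    · apply (hL b b (f a b b)).unique _ rfl
      rw [as1, h]
    · apply (hR b b (f b b a)).unique _ rfl
      rw [← as2, h]
  refine ⟨⟨fun h => ⟨h, ?_, ?_⟩, fun h => h.1⟩, key, fun h a => (h a a).1⟩
  · intro a b c d
    rw [as2, as2, (key h d c).2, (key h d (f b c d)).2]
  · intro a b c d
    rw [← as2, ← as2, (key h a b).1, (key h a (f a b c)).1]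
end

section
/- Every knot-theoretic ternary group (A,[ ]) is semi-commutative and satisfies [abb] = ā for all a,b ∈ A, where ā denotes the skew element of a. -/
variable {A : Type*}

/-- Every knot-theoretic ternary group is semi-commutative and
satisfies [abb] = ā. -/
theorem stmt9 (f : A → A → A → A) (hK : KnotTheoretic f)
    (sk : A → A) (hsk : IsSkew f sk) :
    SemiComm f ∧ ∀ a b : A, f a b b = sk a := by
  obtain ⟨⟨hA, h1, h2, h3⟩, hL, hR⟩ := hK
  have A1 : ∀ a b c d e, f (f a b c) d e = f a (f b c d) e := fun a b c d e => (hA a b c d e).1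
  have A2 : ∀ a b c d e, f a (f b c d) e = f a b (f c d e) := fun a b c d e => (hA a b c d e).2
  have c1 : ∀ a b x y, f x a b = f y a b → x = y := fun a b x y h =>
    (h1 a b (f y a b)).unique h rfl
  have c2 : ∀ a b x y, f a x b = f a y b → x = y := fun a b x y h =>
    (h2 a b (f a y b)).unique h rfl
  have c3 : ∀ a b x y, f a b x = f a b y → x = y := fun a b x y h =>
    (h3 a b (f a b y)).unique h rfl
  have SL : ∀ c e d, f c c d = f e e d := by
    intro c e d
    obtain ⟨b, hb, -⟩ := h1 c d e
    have h := hL c b c d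
    simp only [hb] at h
    rw [A1, A2, A1, A2] at h
    exact c3 _ _ _ _ h
  have SR : ∀ c e a, f a c c = f a e e := by
    intro c e a
    obtain ⟨b, hb, -⟩ := h3 a c e
    have h := hR a c b c
    simp only [hb] at h
    rw [← A2, ← A1, ← A2, ← A1] at h
    exact c1 _ _ _ _ h
  have N1 : ∀ a w, f w (sk a) a = w := by
    intro a w
    obtain ⟨x, hx, -⟩ := h1 a a w
    rw [← hx, A1, A2, hsk]
  have N2 : ∀ a w, f a (sk a) w = w := by
    intro a w
    obtain ⟨x, hx, -⟩ := h3 a a w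
    rw [← hx, ← A2, ← A1, hsk]
  have N4 : ∀ a w, f w a (sk a) = w := by
    intro a w
    apply c2 a a
    rw [A2, hsk]
  have key : ∀ a b, f a b b = sk a := by
    intro a b
    rw [SR b (sk a) a]
    apply c2 a a
    rw [← A1, N4, hsk]
  refine ⟨?_, key⟩
  have inv : ∀ x y w, f x x (f y y w) = w := by
    intro x y w
    rw [SL y (sk x) w, ← A2, ← A1, N4, N2]
  have Z : ∀ x y w, f x x w = f w y y := by
    intro x y w
    rw [SL x w w, SR y w w]
  intro a b c
  apply c1 (f a b c) a
  rw [Eq.comm]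
  have e1 : f (f a b c) (f a b c) a = f a a a := SL _ _ _
  have e2 : f a a (f b c a) = f b c (f c c a) := by
    rw [← A2, ← A1, Z a c b, A1, A2]
  rw [e1, A1, A2, A2, e2, ← A2, SL b c c, A2, inv]
  exact SL _ _ _
end

section
/- Let (A,[ ]) be a ternary group, with ā denoting the skew element of a. Then the following two conditions are equivalent: (i) [abb] = ā = [bba] for all a,b ∈ A; (ii) [ābc] = [ab̄c] = [abc̄] for all a,b,c ∈ A. -/
variable {A : Type*}

/-- In a ternary group, [abb] = ā = [bba] for all a,b
iff [ābc] = [ab̄c] = [abc̄] for all a,b,c. -/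
theorem stmt10 (f : A → A → A → A) (hG : TernaryGroup f)
    (sk : A → A) (hsk : IsSkew f sk) :
    (∀ a b : A, f a b b = sk a ∧ f b b a = sk a) ↔
    (∀ a b c : A, f (sk a) b c = f a (sk b) c ∧ f a (sk b) c = f a b (sk c)) := by
  obtain ⟨hA, h1, h2, h3⟩ := hG
  have L : ∀ a x, f a (sk a) x = x := by
    intro a x
    obtain ⟨v, hv, -⟩ := h3 a a x
    have e := hA a (sk a) a a v
    rw [hsk a] at e
    rw [← hv, ← e.2, ← e.1]
  have R : ∀ a x, f x (sk a) a = x := by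
    intro a x
    obtain ⟨v, hv, -⟩ := h1 a a x
    have e := hA v a a (sk a) a
    rw [hsk a] at e
    rw [← hv, e.1, e.2]
  have M : ∀ a x, f (sk a) a x = x := by
    intro a x
    have e := (hA a (sk a) a x x).1
    rw [hsk a] at e
    exact (h2 a x (f a x x)).unique e.symm rfl
  have S : ∀ a, sk (sk a) = a := fun a =>
    (h2 (sk a) (sk a) (sk a)).unique (L (sk a) (sk a)) (M a (sk a))
  constructor
  · intro h a b c
    have k1 : f (sk a) b c = f a (sk b) c := by
      rw [← (h a b).1, ← (h b b).1, (hA a b b b c).1]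
    have k2 : f a (sk b) c = f a b (sk c) := by
      rw [← (h c b).2, ← (h b b).1, (hA a b b b c).2]
    exact ⟨k1, k2⟩
  · intro h a b
    constructor
    · have e := (h (sk a) b b).1
      rw [S, R] at e
      exact e
    · have e := (h b b (sk a)).2
      rw [S, L] at e
      exact e.symm
end

section
/- Let (A,[ ]) be a semi-commutative ternary group such that [abb] = ā for all a,b ∈ A, where ā denotes the skew element of a. Then (A,[ ]) satisfies the conditions (A3L): [[abc]cd]=[[ab[bcd]][bcd]d] and (A3R): [ab[bcd]]=[a[abc][[abc]cd]] for all a,b,c,d ∈ A. -/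
variable {A : Type*}

/-- A semi-commutative ternary group satisfying [abb] = ā
satisfies (A3L) and (A3R). -/
theorem stmt11 (f : A → A → A → A) (hG : TernaryGroup f) (hsc : SemiComm f)
    (sk : A → A) (hsk : IsSkew f sk) (h23 : ∀ a b : A, f a b b = sk a) :
    A3L f ∧ A3R f := by
  have h12 : ∀ b d : A, f b b d = sk d := fun b d => by rw [hsc, h23]
  have hA : ∀ a b c d e : A, f (f a b c) d e = f a b (f c d e) :=
    fun a b c d e => (hG.1 a b c d e).1.trans (hG.1 a b c d e).2
  refine ⟨fun a b c d => ?_, fun a b c d => ?_⟩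
  · rw [hA a b c c d, hA a b (f b c d) (f b c d) d, h12, h12]
  · rw [← hA a b b c d, ← hA a (f a b c) (f a b c) c d, h23, h23]
end

section
/- Let (A,[ ]) be a ternary group and define the derived ternary operation P(a,b,c) = [ab̄c], where b̄ denotes the skew element of b. Then (A,P) is a Mal'cev algebra (P(a,b,b) = P(b,b,a) = a for all a,b ∈ A) which satisfies the identities P(P(x,y,z),z,t) = P(x,y,t) and P(x,y,P(y,z,t)) = P(x,z,t) for all x,y,z,t ∈ A, and hence satisfies the conditions (A3L): P(P(a,b,c),c,d) = P(P(a,b,P(b,c,d)),P(b,c,d),d) and (A3R): P(a,b,P(b,c,d)) = P(a,P(a,b,c),P(P(a,b,c),c,d)) for all a,b,c,d ∈ A. -/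
variable {A : Type*}

/-- For a ternary group, the derived operation P(a,b,c) = [ab̄c] is a
Mal'cev operation satisfying P(P(x,y,z),z,t) = P(x,y,t) and P(x,y,P(y,z,t)) = P(x,z,t),
and hence the (A3L) and (A3R) conditions. -/
theorem stmt12 (f : A → A → A → A) (hG : TernaryGroup f)
    (sk : A → A) (hsk : IsSkew f sk) :
    (∀ a b : A, f a (sk b) b = a ∧ f b (sk b) a = a) ∧
    (∀ x y z t : A, f (f x (sk y) z) (sk z) t = f x (sk y) t) ∧
    (∀ x y z t : A, f x (sk y) (f y (sk z) t) = f x (sk z) t) ∧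
    A3L (fun a b c => f a (sk b) c) ∧ A3R (fun a b c => f a (sk b) c) := by
  obtain ⟨hA, h1, -, h3⟩ := hG
  have hl : ∀ a b : A, f b (sk b) a = a := by
    intro a b
    obtain ⟨v, hv, -⟩ := h3 b b a
    have hv' : f b b v = a := hv
    rw [← hv', ← (hA b (sk b) b b v).2, ← (hA b (sk b) b b v).1, hsk b]
  have hr : ∀ a b : A, f a (sk b) b = a := by
    intro a b
    obtain ⟨v, hv, -⟩ := h1 b b a
    have hv' : f v b b = a := hv
    rw [← hv', (hA v b b (sk b) b).1, (hA v b b (sk b) b).2, hsk b]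
  have e1 : ∀ x y z t : A, f (f x (sk y) z) (sk z) t = f x (sk y) t := by
    intro x y z t
    rw [(hA _ _ _ _ _).1, (hA _ _ _ _ _).2, hl]
  have e2 : ∀ x y z t : A, f x (sk y) (f y (sk z) t) = f x (sk z) t := by
    intro x y z t
    rw [← (hA _ _ _ _ _).2, ← (hA _ _ _ _ _).1, hr]
  refine ⟨fun a b => ⟨hr a b, hl a b⟩, e1, e2, ?_, ?_⟩
  · intro a b c d
    exact (e1 a b c d).trans (e1 a b _ d).symm
  · intro a b c d
    exact (e2 a b c d).trans (e2 a _ c d).symm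
end

section
/- Let (A,[ ]) be a ternary group and define P(a,b,c) = [ab̄c], where b̄ denotes the skew element of b. Then (A,[ ]) is semi-commutative if and only if (A,P) is a ternary semigroup, i.e., P is associative: P(P(a,b,c),d,e) = P(a,P(b,c,d),e) = P(a,b,P(c,d,e)) for all a,b,c,d,e ∈ A. -/
variable {A : Type*}

/-- A ternary group is semi-commutative iff the derived operation
P(a,b,c) = [ab̄c] is associative. -/
theorem stmt13 (f : A → A → A → A) (hG : TernaryGroup f)
    (sk : A → A) (hsk : IsSkew f sk) :
    SemiComm f ↔ TernaryAssoc (fun a b c => f a (sk b) c) := by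
  obtain ⟨hA, _, hQ2, hQ3⟩ := hG
  have a1 : ∀ a b c d e, f (f a b c) d e = f a (f b c d) e := fun a b c d e => (hA a b c d e).1
  have a2 : ∀ a b c d e, f a (f b c d) e = f a b (f c d e) := fun a b c d e => (hA a b c d e).2
  have cancel : ∀ a b x y, f a x b = f a y b → x = y := fun a b x y h =>
    (hQ2 a b (f a y b)).unique h rfl
  have L1 : ∀ a x, f a (sk a) x = x := by
    intro a x
    obtain ⟨z, hz, _⟩ := hQ3 a a x
    rw [← hz, ← a2, ← a1, hsk]
  have L2 : ∀ a x, f (sk a) a x = x := by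
    intro a x
    apply cancel a a
    rw [← a1, hsk]
  have R2 : ∀ a x, f x a (sk a) = x := by
    intro a x
    apply cancel a a
    rw [a2, hsk]
  have ss : ∀ a, sk (sk a) = a := by
    intro a
    apply cancel (sk a) (sk a)
    rw [hsk, L2]
  have sf : ∀ a b c, sk (f a b c) = f (sk c) (sk b) (sk a) := by
    intro a b c
    apply cancel (f a b c) (f a b c)
    rw [hsk, ← a1 (f a b c), a1 a b c, a2 a b c, L1, R2, L1]
  constructor
  · intro h a b c d e
    show f (f a (sk b) c) (sk d) e = f a (sk (f b (sk c) d)) e ∧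
      f a (sk (f b (sk c) d)) e = f a (sk b) (f c (sk d) e)
    rw [sf, ss, a1, ← a2, h (sk d) c (sk b)]
    exact ⟨rfl, rfl⟩
  · intro h a b c
    have h1 : f (f a (sk (sk a)) b) (sk (sk c)) a = f a (sk (f (sk a) (sk b) (sk c))) a :=
      (h a (sk a) b (sk c) a).1
    rw [sf, ss, ss, ss, a1] at h1
    exact cancel _ _ _ _ h1
end

section
/- Let (A,[ ]) be a semi-commutative ternary group and define P(a,b,c) = [ab̄c], where b̄ denotes the skew element of b. Then (A,P) is a Mal'cev ternary group, i.e., (A,P) is an associative ternary quasigroup satisfying P(a,b,b) = P(b,b,a) = a for all a,b ∈ A. -/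
variable {A : Type*}

/-- For a semi-commutative ternary group, the derived operation
P(a,b,c) = [ab̄c] makes A a Mal'cev ternary group. -/
theorem stmt14 (f : A → A → A → A) (hG : TernaryGroup f) (hsc : SemiComm f)
    (sk : A → A) (hsk : IsSkew f sk) :
    TernaryGroup (fun a b c => f a (sk b) c) ∧
    (∀ a b : A, f a (sk b) b = a ∧ f b (sk b) a = a) := by
  obtain ⟨hA, hQ1, hQ2, hQ3⟩ := hG
  have h1 : ∀ a b c d e : A, f (f a b c) d e = f a (f b c d) e := fun a b c d e => (hA a b c d e).1
  have h2 : ∀ a b c d e : A, f a (f b c d) e = f a b (f c d e) := fun a b c d e => (hA a b c d e).2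
  have R : ∀ x b, f x (sk b) b = x := by
    intro x b
    obtain ⟨u, hu, -⟩ := hQ1 b b x
    rw [← hu, h1, h2, hsk]
  have L : ∀ x b, f b (sk b) x = x := fun x b => by rw [hsc, R]
  have uniq : ∀ t y, f t y t = t → sk t = y := by
    intro t y h
    exact (hQ2 t t t).unique (hsk t) h
  have inv : ∀ b c d, sk (f b (sk c) d) = f (sk b) c (sk d) := by
    intro b c d
    apply uniq
    have key : ∀ x, f (f d (sk c) b) (f (sk b) c (sk d)) x = x := by
      intro x
      rw [h1, h2, ← h1 b, L, ← h2, ← h1, R, L]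
    have := key (f b (sk c) d)
    rwa [hsc d (sk c) b] at this
  have inj : ∀ b c, sk b = sk c → b = c := by
    intro b c h
    have e1 := L c b
    have e2 := R b c
    rw [h] at e1
    exact e2.symm.trans e1
  have surj : ∀ y, ∃ b, sk b = y := by
    intro y
    obtain ⟨z, hz, -⟩ := hQ1 y y y
    refine ⟨z, uniq _ _ ?_⟩
    obtain ⟨q, hq, -⟩ := hQ3 y y z
    calc f z y z = f z y (f y y q) := by rw [hq]
      _ = f (f z y y) y q := by rw [h1, h2]
      _ = z := by rw [hz, hq]
  refine ⟨⟨?_, ?_, ?_, ?_⟩, fun a b => ⟨R a b, L a b⟩⟩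
  · intro a b c d e
    simp only [inv]
    -- both sides reduce to associativity of the original operation
    exact ⟨h1 _ _ _ _ _, h2 _ _ _ _ _⟩
  · intro a b c
    exact hQ1 (sk a) b c
  · intro a b c
    obtain ⟨y, hy, hu⟩ := hQ2 a b c
    obtain ⟨z, rfl⟩ := surj y
    exact ⟨z, hy, fun w hw => inj _ _ (hu _ hw)⟩
  · intro a b c
    exact hQ3 a (sk b) c
end

section
/- Let (A,[ ]) be a semi-commutative, (1,2)-associative ternary groupoid, and suppose there exists a unary operation x ↦ x̄ on A such that [abb] = ā and [āab] = b for all a,b ∈ A. Then (A,[ ]) is a knot-theoretic ternary group. -/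
variable {A : Type*}

/-- A semi-commutative, (1,2)-associative ternary groupoid with a unary
operation x ↦ x̄ satisfying [abb] = ā and [āab] = b is a knot-theoretic ternary group. -/
theorem stmt18 (f : A → A → A → A) (hsc : SemiComm f)
    (h12 : ∀ a b c d e : A, f (f a b c) d e = f a (f b c d) e)
    (sk : A → A) (h23 : ∀ a b : A, f a b b = sk a)
    (h3 : ∀ a b : A, f (sk a) a b = b) :
    KnotTheoretic f := by
  have h23' : ∀ a b c d e : A, f a (f b c d) e = f a b (f c d e) := by
    intro a b c d e
    rw [hsc a (f b c d) e, hsc b c d, ← h12, hsc _ b a, hsc e d c]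
  have k1 : ∀ a c : A, f a (sk a) c = c := by
    intro a c
    have h := h3 a c
    rw [← h23 a a, h12, h23] at h
    exact h
  have k2 : ∀ a c : A, f c (sk a) a = c := fun a c => by rw [hsc, k1]
  have k3 : ∀ a c : A, f c a (sk a) = c := fun a c => by rw [hsc, h3]
  have kk : ∀ a : A, sk (sk a) = a := fun a => by rw [← h23 (sk a) a, h3]
  have q1 : ∀ a b c : A, ∃! z : A, f z a b = c := by
    intro a b c
    refine ⟨sk (f c (sk b) a), ?_, ?_⟩
    · show f (sk (f c (sk b) a)) a b = c
      rw [← h23 (f c (sk b) a) a, h12, h23, h12, h23', k1, k2]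
    · intro z hz
      rw [← hz, h12, h23', k1, h23, kk]
  refine ⟨⟨fun a b c d e => ⟨h12 a b c d e, h23' a b c d e⟩, q1, ?_, ?_⟩, ?_, ?_⟩
  · intro a b c
    refine ⟨f (sk a) c (sk b), ?_, ?_⟩
    · show f a (f (sk a) c (sk b)) b = c
      rw [← h12, k1, k2]
    · intro z hz
      rw [← hz, ← h12, h3, k3]
  · intro a b c
    obtain ⟨z, hz, hu⟩ := q1 b a c
    exact ⟨z, (hsc a b z).trans hz, fun y hy => hu y ((hsc y b a).trans hy)⟩
  · intro a b c d
    rw [h12, h12 a b _ _ d, h23', h23', hsc c c d, hsc _ _ d, h23, h23]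
  · intro a b c d
    rw [← h23' a b, ← h12, h23, ← h23' a (f a b c), ← h12, h23]
end

section
/- In a semi-commutative ternary groupoid (A,[ ]), the condition (A3L): [[abc]cd]=[[ab[bcd]][bcd]d] for all a,b,c,d ∈ A holds if and only if the condition (A3R): [ab[bcd]]=[a[abc][[abc]cd]] for all a,b,c,d ∈ A holds. -/
variable {A : Type*}

/-- In a semi-commutative ternary groupoid, (A3L) holds iff (A3R) holds. -/
theorem stmt19 (f : A → A → A → A) (hsc : SemiComm f) :
    A3L f ↔ A3R f := by
  constructor
  · intro h a b c d
    have h' := h d c b a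
    rw [hsc (f d c b) b a, hsc d c b, hsc (f d c (f c b a)), hsc d c (f c b a), hsc c b a] at h'
    exact h'
  · intro h a b c d
    have h' := h d c b a
    rw [hsc d c (f c b a), hsc c b a, hsc d (f d c b), hsc (f d c b) b a, hsc d c b] at h'
    exact h'
end
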